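/- Identification of the cofactor as a remainder of a shorter symmetric scheme: let q_1, …, q_s be positive integers with continuants 𝔠_{i,j}, and let i, j be integers with 0 ≤ j ≤ i and i + j ≤ s. Let r'_1, r'_2, … denote the remainder sequence of the symmetric Euclidean scheme associated to (q_{i−j+1}, …, q_s). Then r'_{2j+1} = 𝔠_{i−j+1,s}·𝔠_{i+j+1,s} + 𝔠_{i−j+1,s−1}·𝔠_{i+j+1,s−1}. -/

import Mathlib

/-- Auxiliary for continuants: `contAux u i n` is the continuant `𝔠_{i, i+n-1}` of the
sequence `u`, computed via the recurrence `𝔠_{i,j} = u j * 𝔠_{i,j-1} + 𝔠_{i,j-2}`. -/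
def contAux (u : ℤ → ℤ) (i : ℤ) : ℕ → ℤ
  | 0 => 1
  | 1 => u i
  | n + 2 => u (i + n + 1) * contAux u i (n + 1) + contAux u i n

/-- `cont u i j` is the continuant `𝔠_{i,j}` of the sequence `u`, with the boundary
conventions `𝔠_{j+1,j} = 1` and `𝔠_{i,j} = 0` for `i > j + 1` (in particular
`𝔠_{j+2,j} = 0`), and the recurrence `𝔠_{i,j} = u j * 𝔠_{i,j-1} + 𝔠_{i,j-2}`. -/
def cont (u : ℤ → ℤ) (i j : ℤ) : ℤ :=
  if j + 1 < i then 0 else contAux u i (j + 1 - i).toNat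

/-- The symmetric doubling of `(q_1, …, q_s)`:
`(Q_1, …, Q_{2s}) = (q_1, …, q_s, q_s, …, q_1)`. -/
def symQuot (q : ℤ → ℤ) (s : ℕ) (k : ℤ) : ℤ :=
  if k ≤ (s : ℤ) then q k else q (2 * (s : ℤ) + 1 - k)

/-- Auxiliary: `symAux q s m` is the remainder `r_{2s+2-m}` of the symmetric
Euclidean scheme attached to `(q_1, …, q_s)`. -/
def symAux (q : ℤ → ℤ) (s : ℕ) : ℕ → ℤ
  | 0 => 0
  | 1 => 1
  | m + 2 => symQuot q s (2 * (s : ℤ) - (m : ℤ)) * symAux q s (m + 1) + symAux q s m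

/-- `symRem q s k` is the remainder `r_k` of the symmetric Euclidean scheme attached to
`(q_1, …, q_s)`: with `(Q_1, …, Q_{2s}) = (q_1, …, q_s, q_s, …, q_1)`, one has
`r_{2s+2} = 0`, `r_{2s+1} = 1`, and `r_k = Q_k * r_{k+1} + r_{k+2}` for `1 ≤ k ≤ 2s`. -/
def symRem (q : ℤ → ℤ) (s : ℕ) (k : ℤ) : ℤ :=
  symAux q s (2 * (s : ℤ) + 2 - k).toNat

/-!
Continuants are the fundamental solutions of the recurrence `f j = u j * f (j - 1) + f (j - 2)`:
every solution is determined by two consecutive values, with continuants as coefficients. Applied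
to `j ↦ 𝔠_{i-1,j}` this yields the mirrored recurrence of continuants in their left index, and hence
the same principle for `f i = u i * f (i + 1) + f (i + 2)`. The second half of the symmetric scheme,
read backwards, is the continuant recurrence of `q`, so the two middle remainders are `𝔠_{1,s}` and
`𝔠_{1,s-1}`. In the first half the remainders solve the mirrored recurrence from these values.
-/

section Continuants

variable (u : ℤ → ℤ)

theorem cont_eq_zero {i j : ℤ} (h : j + 1 < i) : cont u i j = 0 := if_pos h

theorem cont_eq_one {i j : ℤ} (h : j + 1 = i) : cont u i j = 1 := by
  simp [cont, contAux, h]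

theorem cont_self (i : ℤ) : cont u i i = u i := by
  simp [cont, contAux]

theorem cont_eq_mul_add_right {i j : ℤ} (hij : i ≤ j) :
    cont u i j = u j * cont u i (j - 1) + cont u i (j - 2) := by
  obtain ⟨n, rfl⟩ := Int.le.dest hij
  cases n with
  | zero => simp [cont_self, cont_eq_one, cont_eq_zero u (i := i) (j := i - 2) (by lia)]
  | succ n =>
    simp only [cont]
    rw [if_neg (by lia), if_neg (by lia), if_neg (by lia),
      show (i + (n + 1 : ℕ) + 1 - i).toNat = n + 2 by lia,
      show (i + (n + 1 : ℕ) - 1 + 1 - i).toNat = n + 1 by lia,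
      show (i + (n + 1 : ℕ) - 2 + 1 - i).toNat = n by lia, contAux,
      Nat.cast_succ, ← add_assoc]

variable {u} in
theorem eq_cont_mul_add_of_recurrence_right {f : ℤ → ℤ} {i j : ℤ} (hij : i ≤ j + 1)
    (hf : ∀ l, i ≤ l → l ≤ j → f l = u l * f (l - 1) + f (l - 2)) :
    f j = cont u i j * f (i - 1) + cont u (i + 1) j * f (i - 2) := by
  obtain rfl | rfl | hlt : j = i - 1 ∨ j = i ∨ i < j := by lia
  · simp [cont_eq_one, cont_eq_zero]
  · rw [hf j le_rfl le_rfl, cont_self, cont_eq_one u rfl, one_mul]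
  · have f_pred := eq_cont_mul_add_of_recurrence_right (j := j - 1) (by lia)
      fun l hil hlj => hf l hil (by lia)
    have f_pred_pred := eq_cont_mul_add_of_recurrence_right (j := j - 2) (by lia)
      fun l hil hlj => hf l hil (by lia)
    rw [hf j hlt.le le_rfl, f_pred, f_pred_pred, cont_eq_mul_add_right u hlt.le,
      cont_eq_mul_add_right u (i := i + 1) hlt]
    ring
termination_by (j + 1 - i).toNat

theorem cont_eq_mul_add_left {i j : ℤ} (hij : i ≤ j) :
    cont u i j = u i * cont u (i + 1) j + cont u (i + 2) j := by
  have solution := eq_cont_mul_add_of_recurrence_right (u := u) (f := cont u i) (i := i + 1)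
    (j := j) (by lia) fun l hil _ => cont_eq_mul_add_right u (by lia)
  rw [solution, add_sub_cancel_right, cont_self, cont_eq_one u (i := i) (by lia)]
  ring_nf

variable {u} in
theorem eq_cont_mul_add_of_recurrence_left {f : ℤ → ℤ} {i j : ℤ} (hij : i ≤ j + 1)
    (hf : ∀ l, i ≤ l → l ≤ j → f l = u l * f (l + 1) + f (l + 2)) :
    f i = cont u i j * f (j + 1) + cont u i (j - 1) * f (j + 2) := by
  obtain rfl | rfl | hlt : i = j + 1 ∨ i = j ∨ i < j := by lia
  · simp [cont_eq_one, cont_eq_zero]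
  · rw [hf i le_rfl le_rfl, cont_self, cont_eq_one u (by lia), one_mul]
  · have f_succ := eq_cont_mul_add_of_recurrence_left (i := i + 1) (j := j) (by lia)
      fun l hil hlj => hf l (by lia) hlj
    have f_succ_succ := eq_cont_mul_add_of_recurrence_left (i := i + 2) (j := j) (by lia)
      fun l hil hlj => hf l (by lia) hlj
    rw [hf i le_rfl hlt.le, f_succ, f_succ_succ, cont_eq_mul_add_left u hlt.le,
      cont_eq_mul_add_left u (i := i) (j := j - 1) (by lia)]
    ring
termination_by (j + 1 - i).toNat

theorem cont_comp_add_right (d i j : ℤ) :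
    cont (fun k => u (k + d)) i j = cont u (i + d) (j + d) := by
  obtain hlt | hle := lt_or_ge (j + 1) i
  · rw [cont_eq_zero _ hlt, cont_eq_zero _ (by lia)]
  · have solution := eq_cont_mul_add_of_recurrence_right (u := fun k => u (k + d))
      (f := fun l => cont u (i + d) (l + d)) hle fun l hil _ => by
        rw [cont_eq_mul_add_right u (by lia), sub_add_eq_add_sub, sub_add_eq_add_sub]
    rw [solution, cont_eq_one u (by lia), cont_eq_zero u (by lia)]
    ring

end Continuants

section SymmetricScheme

variable (q : ℤ → ℤ) (s : ℕ) {k : ℤ}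

theorem symRem_eq_symQuot_mul_add (hk : k ≤ 2 * s) :
    symRem q s k = symQuot q s k * symRem q s (k + 1) + symRem q s (k + 2) := by
  obtain ⟨m, hm⟩ := Int.le.dest hk
  obtain rfl : k = 2 * s - m := by lia
  simp only [symRem]
  rw [show (2 * (s : ℤ) + 2 - (2 * s - m)).toNat = m + 2 by lia,
    show (2 * (s : ℤ) + 2 - (2 * s - m + 1)).toNat = m + 1 by lia,
    show (2 * (s : ℤ) + 2 - (2 * s - m + 2)).toNat = m by lia, symAux]

theorem symRem_two_mul_add_one : symRem q s (2 * s + 1) = 1 := by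
  rw [symRem, show (2 * (s : ℤ) + 2 - (2 * s + 1)).toNat = 1 by lia, symAux]

theorem symRem_two_mul_add_two : symRem q s (2 * s + 2) = 0 := by
  rw [symRem, sub_self, Int.toNat_zero, symAux]

theorem symRem_two_mul_add_one_sub (hk : -1 ≤ k) (hks : k ≤ s) :
    symRem q s (2 * s + 1 - k) = cont q 1 k := by
  obtain rfl | hk_nonneg := hk.eq_or_lt
  · rw [cont_eq_zero q (by lia), sub_neg_eq_add, add_assoc]
    exact symRem_two_mul_add_two q s
  · have solution := eq_cont_mul_add_of_recurrence_right (u := q) (i := 1) (j := k)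
      (f := fun l => symRem q s (2 * s + 1 - l)) (by lia) fun l hl hlk => by
        rw [symRem_eq_symQuot_mul_add q s (by lia), symQuot, if_neg (by lia)]
        ring_nf
    rw [solution, sub_self, sub_zero, symRem_two_mul_add_one,
      show 2 * (s : ℤ) + 1 - (1 - 2) = 2 * s + 2 by ring, symRem_two_mul_add_two]
    ring

theorem symRem_eq_cont_mul_cont_add (hk : k ≤ s + 1) :
    symRem q s k = cont q 1 s * cont q k s + cont q 1 (s - 1) * cont q k (s - 1) := by
  have middle : symRem q s (s + 1) = cont q 1 s := by
    rw [← symRem_two_mul_add_one_sub q s (by lia) le_rfl]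
    ring_nf
  have middle_succ : symRem q s (s + 2) = cont q 1 (s - 1) := by
    rw [← symRem_two_mul_add_one_sub q s (by lia) (by lia)]
    ring_nf
  have solution := eq_cont_mul_add_of_recurrence_left (u := q) (f := symRem q s) hk
    fun l _ hls => by rw [symRem_eq_symQuot_mul_add q s (by lia), symQuot, if_pos hls]
  rw [solution, middle, middle_succ]
  ring

end SymmetricScheme

theorem cofactor_is_remainder_of_shorter_scheme_general
    (s : ℕ) (q : ℤ → ℤ) (i j : ℕ) (hijs : i + j ≤ s) :
    symRem (fun k => q (k + (i : ℤ) - (j : ℤ))) (s - i + j) (2 * (j : ℤ) + 1) =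
      cont q ((i : ℤ) - (j : ℤ) + 1) (s : ℤ) * cont q ((i : ℤ) + (j : ℤ) + 1) (s : ℤ) +
        cont q ((i : ℤ) - (j : ℤ) + 1) ((s : ℤ) - 1) *
          cont q ((i : ℤ) + (j : ℤ) + 1) ((s : ℤ) - 1) := by
  have length_cast : ((s - i + j : ℕ) : ℤ) = s - i + j := by lia
  simp only [add_sub_assoc]
  rw [symRem_eq_cont_mul_cont_add _ _ (by lia), length_cast]
  simp only [cont_comp_add_right]
  ring_nf

theorem cofactor_is_remainder_of_shorter_scheme
    (s : ℕ) (hs : 1 ≤ s) (q : ℤ → ℤ) (hq : ∀ k : ℤ, 1 ≤ k → k ≤ (s : ℤ) → 0 < q k)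
    (i j : ℕ) (hji : j ≤ i) (hijs : i + j ≤ s) :
    symRem (fun k => q (k + (i : ℤ) - (j : ℤ))) (s - i + j) (2 * (j : ℤ) + 1) =
      cont q ((i : ℤ) - (j : ℤ) + 1) (s : ℤ) * cont q ((i : ℤ) + (j : ℤ) + 1) (s : ℤ) +
        cont q ((i : ℤ) - (j : ℤ) + 1) ((s : ℤ) - 1) *
          cont q ((i : ℤ) + (j : ℤ) + 1) ((s : ℤ) - 1) :=
  cofactor_is_remainder_of_shorter_scheme_general s q i j hijs
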